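/- Let d/(d+2) < α < 1 and let f be a probability density function on ℝ^d with zero mean (∫_{ℝ^d} x·f(x) dx = 0), positive definite covariance matrix S = ∫_{ℝ^d} x·xᵀ·f(x) dx, and ∫_{ℝ^d} f(x)^α dx < ∞. Then the Rényi entropy of order α of f satisfies (1/(1−α))·ln(∫_{ℝ^d} f(x)^α dx) ≤ C_d(α) + (1/2)·ln(det S), where C_d(α) = (d/2)·ln(π·(α(d+2)−d)/(1−α)) − (α/(1−α))·ln((α(d+2)−d)/(2α)) − ln( Γ(α/(1−α)) / Γ((α(d+2)−d)/(2(1−α))) ). -/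

import Mathlib

open MeasureTheory Real Matrix

lemma gaussN (d : ℕ) (t : ℝ) (ht : 0 < t) :
    ∫⁻ y : Fin d → ℝ, ENNReal.ofReal (exp (-t * ∑ i, y i ^ 2)) = ENNReal.ofReal ((π / t) ^ ((d:ℝ)/2)) := by
  have e : ∀ y : Fin d → ℝ, exp (-t * ∑ i, y i ^ 2) = ∏ i, exp (-t * y i ^ 2) := by
    intro y; rw [Finset.mul_sum, exp_sum]
  have hi : Integrable (fun y : Fin d → ℝ => ∏ i, exp (-t * y i ^ 2)) :=
    Integrable.fintype_prod (f := fun (_ : Fin d) (x:ℝ) => exp (-t * x ^ 2))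
      (fun _ => integrable_exp_neg_mul_sq ht)
  simp_rw [e]
  rw [← ofReal_integral_eq_lintegral_ofReal hi
    (Filter.Eventually.of_forall fun y => Finset.prod_nonneg fun i _ => (exp_pos _).le),
    integral_fintype_prod_volume_eq_pow (fun x : ℝ => exp (-t * x ^ 2)), integral_gaussian]
  have : 0 < π / t := by positivity
  rw [Fintype.card_fin, Real.sqrt_eq_rpow, ← Real.rpow_natCast, ← Real.rpow_mul this.le]
  congr 2; ring

lemma gamL (a r : ℝ) (ha : 0 < a) (hr : 0 < r) :
    ∫⁻ t in Set.Ioi (0:ℝ), ENNReal.ofReal (t ^ (a-1) * exp (-(r*t)))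
      = ENNReal.ofReal ((1/r) ^ a * Gamma a) := by
  have h := Real.integral_rpow_mul_exp_neg_mul_Ioi ha hr
  have hp : 0 < (1/r) ^ a * Gamma a := by have := Real.Gamma_pos_of_pos ha; positivity
  rw [← h]
  symm
  apply ofReal_integral_eq_lintegral_ofReal
  · by_contra hc
    rw [integral_undef hc] at h
    linarith
  · filter_upwards [ae_restrict_mem measurableSet_Ioi] with t ht
    have : (0:ℝ) < t := ht
    positivity

lemma studentL (d : ℕ) (p : ℝ) (hp : (d:ℝ)/2 < p) :
    ∫⁻ y : Fin d → ℝ, ENNReal.ofReal ((1 + ∑ i, y i ^ 2) ^ (-p))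
      = ENNReal.ofReal (π ^ ((d:ℝ)/2) * Gamma (p - d/2) / Gamma p) := by
  have hp0 : 0 < p := lt_of_le_of_lt (by positivity) hp
  have hG := Real.Gamma_pos_of_pos hp0
  have h1 : ∫⁻ y : Fin d → ℝ, ∫⁻ t in Set.Ioi (0:ℝ),
        ENNReal.ofReal (t ^ (p-1) * exp (-((1 + ∑ i, y i ^ 2)*t)))
      = ENNReal.ofReal (Gamma p) * ∫⁻ y : Fin d → ℝ, ENNReal.ofReal ((1 + ∑ i, y i ^ 2) ^ (-p)) := by
    rw [← lintegral_const_mul' _ _ ENNReal.ofReal_ne_top]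
    congr 1; ext y
    have hr : 0 < 1 + ∑ i, y i ^ 2 := by positivity
    rw [gamL p _ hp0 hr, ← ENNReal.ofReal_mul hG.le, mul_comm, one_div, Real.inv_rpow hr.le,
      Real.rpow_neg hr.le]
  have h2 : ∫⁻ y : Fin d → ℝ, ∫⁻ t in Set.Ioi (0:ℝ),
        ENNReal.ofReal (t ^ (p-1) * exp (-((1 + ∑ i, y i ^ 2)*t)))
      = ENNReal.ofReal (π ^ ((d:ℝ)/2) * Gamma (p - d/2)) := by
    rw [lintegral_lintegral_swap]
    · have : ∀ t ∈ Set.Ioi (0:ℝ), ∫⁻ y : Fin d → ℝ,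
          ENNReal.ofReal (t ^ (p-1) * exp (-((1 + ∑ i, y i ^ 2)*t)))
          = ENNReal.ofReal (π ^ ((d:ℝ)/2)) *
            ENNReal.ofReal (t ^ ((p - d/2) - 1) * exp (-(1 * t))) := by
        intro t ht
        have ht : 0 < t := ht
        have e : ∀ y : Fin d → ℝ, ENNReal.ofReal (t ^ (p-1) * exp (-((1 + ∑ i, y i ^ 2)*t)))
            = ENNReal.ofReal (t ^ (p-1) * exp (-t)) *
              ENNReal.ofReal (exp (-t * ∑ i, y i ^ 2)) := by
          intro y
          rw [← ENNReal.ofReal_mul (by positivity), mul_assoc, ← exp_add]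
          congr 3; ring
        simp_rw [e]
        rw [lintegral_const_mul' _ _ ENNReal.ofReal_ne_top, gaussN d t ht,
          ← ENNReal.ofReal_mul (by positivity), ← ENNReal.ofReal_mul (by positivity)]
        congr 1
        rw [Real.div_rpow pi_pos.le ht.le, show p - d/2 - 1 = (p-1) - d/2 by ring,
          Real.rpow_sub ht (p-1), one_mul]
        ring
      rw [setLIntegral_congr_fun measurableSet_Ioi this,
        lintegral_const_mul' _ _ ENNReal.ofReal_ne_top, gamL _ _ (by linarith) one_pos,
        ← ENNReal.ofReal_mul (by positivity)]
      simp
    · apply Measurable.aemeasurable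
      apply ENNReal.measurable_ofReal.comp
      fun_prop
  rw [h2] at h1
  rw [ENNReal.ofReal_div_of_pos hG, h1, mul_comm, ENNReal.mul_div_cancel_right]
  · simpa using hG
  · exact ENNReal.ofReal_ne_top

lemma studentI (d : ℕ) (p : ℝ) (hp : (d:ℝ)/2 < p) :
    Integrable (fun y : Fin d → ℝ => (1 + ∑ i, y i ^ 2) ^ (-p)) ∧
    ∫ y : Fin d → ℝ, (1 + ∑ i, y i ^ 2) ^ (-p) = π ^ ((d:ℝ)/2) * Gamma (p - d/2) / Gamma p := by
  have hp0 : 0 < p := lt_of_le_of_lt (by positivity) hp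
  have hG := Real.Gamma_pos_of_pos hp0
  have hG' := Real.Gamma_pos_of_pos (sub_pos.2 hp)
  have hm : AEStronglyMeasurable (fun y : Fin d → ℝ => (1 + ∑ i, y i ^ 2) ^ (-p)) :=
    Measurable.aestronglyMeasurable (by fun_prop)
  have h0 : 0 ≤ᵐ[volume] (fun y : Fin d → ℝ => (1 + ∑ i, y i ^ 2) ^ (-p)) :=
    Filter.Eventually.of_forall fun y => by dsimp; positivity
  constructor
  · refine ⟨hm, ?_⟩
    rw [hasFiniteIntegral_iff_ofReal h0, studentL d p hp]
    exact ENNReal.ofReal_lt_top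
  · rw [integral_eq_lintegral_of_nonneg_ae h0 hm, studentL d p hp, ENNReal.toReal_ofReal]
    positivity

lemma studentM (d : ℕ) (p : ℝ) (hp : (d:ℝ)/2 < p) (M : Matrix (Fin d) (Fin d) ℝ) (hM : M.det ≠ 0) :
    Integrable (fun y : Fin d → ℝ => (1 + ∑ i, (M *ᵥ y) i ^ 2) ^ (-p)) ∧
    ∫ y : Fin d → ℝ, (1 + ∑ i, (M *ᵥ y) i ^ 2) ^ (-p)
      = |M.det|⁻¹ * (π ^ ((d:ℝ)/2) * Gamma (p - d/2) / Gamma p) := by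
  obtain ⟨hI, hv⟩ := studentI d p hp
  have hmap := Real.map_matrix_volume_pi_eq_smul_volume_pi hM
  have hmeas : Measurable (Matrix.toLin' M) := (LinearMap.continuous_of_finiteDimensional _).measurable
  have hI2 : Integrable (fun y : Fin d → ℝ => (1 + ∑ i, y i ^ 2) ^ (-p))
      (Measure.map (Matrix.toLin' M) volume) := by
    rw [hmap]; exact hI.smul_measure ENNReal.ofReal_ne_top
  constructor
  · exact hI2.comp_measurable hmeas
  · have := integral_map (μ := volume) hmeas.aemeasurable hI2.aestronglyMeasurable
    rw [hmap, integral_smul_measure, hv, ENNReal.toReal_ofReal (abs_nonneg _), abs_inv] at this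
    simpa using this.symm

open scoped MatrixOrder ComplexOrder in
lemma exists_sqrt_inv (d : ℕ) (S : Matrix (Fin d) (Fin d) ℝ) (hS : S.PosDef) :
    ∃ B : Matrix (Fin d) (Fin d) ℝ, S⁻¹ = Bᵀ * B := by
  obtain ⟨B, hB⟩ := CStarAlgebra.nonneg_iff_eq_star_mul_self.mp hS.inv.posSemidef.nonneg
  exact ⟨B, by rw [hB, Matrix.star_eq_conjTranspose, Matrix.conjTranspose_eq_transpose_of_trivial]⟩

lemma quad_int (d : ℕ) (f : (Fin d → ℝ) → ℝ) (S B : Matrix (Fin d) (Fin d) ℝ)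
    (hcov_int : ∀ a b : Fin d, Integrable (fun x => x a * x b * f x))
    (hcov : ∀ a b : Fin d, ∫ x, x a * x b * f x = S a b)
    (hS : S.PosDef) (hB : S⁻¹ = Bᵀ * B) :
    Integrable (fun x => (∑ i, (B *ᵥ x) i ^ 2) * f x) ∧
    ∫ x, (∑ i, (B *ᵥ x) i ^ 2) * f x = d := by
  have e : ∀ x : Fin d → ℝ, (∑ i, (B *ᵥ x) i ^ 2) * f x
      = ∑ a, ∑ b, S⁻¹ a b * (x a * x b * f x) := by
    intro x
    have : ∑ i, (B *ᵥ x) i ^ 2 = x ⬝ᵥ (S⁻¹ *ᵥ x) := by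
      rw [hB, ← Matrix.mulVec_mulVec, Matrix.dotProduct_mulVec, Matrix.vecMul_transpose]
      simp [dotProduct, sq]
    rw [this]
    simp only [dotProduct, mulVec, Finset.mul_sum, Finset.sum_mul]
    refine Finset.sum_congr rfl fun a _ => Finset.sum_congr rfl fun b _ => by ring
  simp_rw [e]
  constructor
  · exact integrable_finsetSum _ fun a _ => integrable_finsetSum _ fun b _ =>
      (hcov_int a b).const_mul _
  · have hI : ∀ a ∈ (Finset.univ : Finset (Fin d)),
        Integrable (fun x : Fin d → ℝ => ∑ b, S⁻¹ a b * (x a * x b * f x)) := fun a _ =>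
      integrable_finsetSum _ fun b _ => (hcov_int a b).const_mul _
    rw [integral_finsetSum _ hI]
    have hsym : ∀ a b, S a b = S b a := fun a b => by
      have := hS.isHermitian.apply a b
      simpa using this.symm
    have : ∀ a, ∫ x, ∑ b, S⁻¹ a b * (x a * x b * f x) = (S⁻¹ * S) a a := by
      intro a
      rw [integral_finsetSum _ fun b _ => (hcov_int a b).const_mul _, Matrix.mul_apply]
      refine Finset.sum_congr rfl fun b _ => ?_
      rw [integral_const_mul, hcov, hsym]
    simp_rw [this]
    rw [Matrix.nonsing_inv_mul _ (isUnit_iff_ne_zero.2 hS.det_pos.ne')]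
    simp

/-- Hölder-type inequality, via weighted AM-GM. -/
lemma holder_aux (d : ℕ) (α : ℝ) (h0 : 0 < α) (h1 : α < 1) (f g : (Fin d → ℝ) → ℝ)
    (hf0 : ∀ x, 0 ≤ f x) (hg : ∀ x, 0 < g x) (hfα : Integrable (fun x => f x ^ α))
    (A B : ℝ) (hA : 0 < A) (hB : 0 < B)
    (hi1 : Integrable (fun x => g x * f x)) (hv1 : ∫ x, g x * f x = A)
    (hi2 : Integrable (fun x => g x ^ (-(α / (1 - α))))) (hv2 : ∫ x, g x ^ (-(α / (1 - α))) = B) :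
    ∫ x, f x ^ α ≤ A ^ α * B ^ (1 - α) := by
  have h1' : 0 < 1 - α := by linarith
  have key : ∀ x, f x ^ α ≤ A ^ α * B ^ (1 - α) *
      (α / A * (g x * f x) + (1 - α) / B * g x ^ (-(α / (1 - α)))) := by
    intro x
    have hgx := hg x
    have hfx := hf0 x
    have := Real.geom_mean_le_arith_mean2_weighted h0.le h1'.le
      (p₁ := g x * f x / A) (p₂ := g x ^ (-(α / (1 - α))) / B) (by positivity) (by positivity) (by ring)
    rw [Real.div_rpow (by positivity) hA.le, Real.div_rpow (by positivity) hB.le,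
      Real.mul_rpow hgx.le hfx, ← Real.rpow_mul hgx.le,
      show -(α / (1 - α)) * (1 - α) = -α by field_simp, Real.rpow_neg hgx.le] at this
    have hgα : 0 < g x ^ α := by positivity
    have hAα : 0 < A ^ α := by positivity
    have hBα : 0 < B ^ (1 - α) := by positivity
    calc f x ^ α = A ^ α * B ^ (1 - α) *
          (g x ^ α * f x ^ α / A ^ α * ((g x ^ α)⁻¹ / B ^ (1 - α))) := by field_simp
      _ ≤ _ := by
        refine mul_le_mul_of_nonneg_left (this.trans (le_of_eq ?_)) (by positivity)
        ring
  have := integral_mono hfα (((hi1.const_mul (α / A)).add (hi2.const_mul ((1 - α) / B))).const_mul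
    (A ^ α * B ^ (1 - α))) key
  refine this.trans (le_of_eq ?_)
  simp only [Pi.add_apply]
  rw [integral_const_mul, integral_add (hi1.const_mul _) (hi2.const_mul _), integral_const_mul,
    integral_const_mul, hv1, hv2]
  field_simp
  ring



/-- **Upper bound for the Rényi entropy of order `d/(d+2) < α < 1` in terms of the covariance
matrix.** If `f` is a probability density on `ℝ^d` with zero mean, positive definite covariance
matrix `S`, and `∫ f^α < ∞`, then `(1/(1−α))·ln(∫ f^α) ≤ C_d(α) + (1/2)·ln(det S)` where
`C_d(α) = (d/2)·ln(π(α(d+2)−d)/(1−α)) − (α/(1−α))·ln((α(d+2)−d)/(2α))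
          − ln(Γ(α/(1−α)) / Γ((α(d+2)−d)/(2(1−α))))`. -/
theorem renyi_entropy_upper_bound_of_lt_one
    (d : ℕ) (α : ℝ) (hαl : (d : ℝ) / ((d : ℝ) + 2) < α) (hαu : α < 1)
    (f : (Fin d → ℝ) → ℝ) (S : Matrix (Fin d) (Fin d) ℝ)
    (hmeas : Measurable f) (hf0 : ∀ x, 0 ≤ f x) (hf1 : ∫ x, f x = 1)
    (hmean : ∀ a : Fin d, ∫ x, x a * f x = 0)
    (hcov_int : ∀ a b : Fin d, Integrable (fun x => x a * x b * f x))
    (hcov : ∀ a b : Fin d, ∫ x, x a * x b * f x = S a b)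
    (hS : S.PosDef)
    (hfα : Integrable (fun x => f x ^ α)) :
    (1 / (1 - α)) * Real.log (∫ x, f x ^ α) ≤
      ((d : ℝ) / 2) * Real.log (π * (α * ((d : ℝ) + 2) - d) / (1 - α))
        - (α / (1 - α)) * Real.log ((α * ((d : ℝ) + 2) - d) / (2 * α))
        - Real.log (Real.Gamma (α / (1 - α)) /
            Real.Gamma ((α * ((d : ℝ) + 2) - d) / (2 * (1 - α))))
        + (1 / 2) * Real.log S.det := by
  have hd : (0:ℝ) ≤ d := Nat.cast_nonneg d
  have h0 : 0 < α := lt_of_le_of_lt (by positivity) hαl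
  have h1 : 0 < 1 - α := by linarith
  rw [div_lt_iff₀ (by positivity)] at hαl
  set m : ℝ := α * ((d : ℝ) + 2) - d with hm
  have hm0 : 0 < m := by rw [hm]; linarith
  have hfi : Integrable f := by
    by_contra hc
    rw [integral_undef hc] at hf1
    exact zero_ne_one hf1
  have hpos : 0 < ∫ x, f x ^ α := by
    have hnn : ∀ x, 0 ≤ f x ^ α := fun x => Real.rpow_nonneg (hf0 x) _
    refine lt_of_le_of_ne (integral_nonneg hnn) fun h => ?_
    rw [eq_comm, integral_eq_zero_iff_of_nonneg hnn hfα] at h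
    have : f =ᵐ[volume] 0 := by
      filter_upwards [h] with x hx
      simpa using ((Real.rpow_eq_zero (hf0 x) h0.ne').1 hx)
    rw [integral_congr_ae this] at hf1
    simp at hf1
  obtain ⟨B, hB⟩ := exists_sqrt_inv d S hS
  have hSd := hS.det_pos
  have hBd : B.det * B.det = S.det⁻¹ := by
    have := congrArg Matrix.det hB
    rw [Matrix.det_mul, Matrix.det_transpose, Matrix.det_nonsing_inv, Ring.inverse_eq_inv'] at this
    exact this.symm
  have hBd0 : B.det ≠ 0 := by
    intro h
    rw [h, zero_mul] at hBd
    exact (inv_pos.2 hSd).ne hBd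
  obtain ⟨hq1, hq2⟩ := quad_int d f S B hcov_int hcov hS hB
  set c : ℝ := (1 - α) / m with hc
  have hc0 : 0 < c := by positivity
  have hMd : (√c • B).det = √c ^ d * B.det := by simp [Matrix.det_smul]
  have hMd0 : (√c • B).det ≠ 0 := by rw [hMd]; positivity
  have hp : (d:ℝ)/2 < α / (1 - α) := by
    rw [div_lt_div_iff₀ two_pos h1]; linarith
  have hpe : α / (1 - α) - d / 2 = m / (2 * (1 - α)) := by
    rw [hm]; field_simp; ring
  obtain ⟨hs1, hs2⟩ := studentM d _ hp (√c • B) hMd0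
  have hG1 : 0 < Gamma (α / (1 - α)) := Real.Gamma_pos_of_pos (by positivity)
  have hG2 : 0 < Gamma (m / (2 * (1 - α))) := Real.Gamma_pos_of_pos (by positivity)
  rw [hpe] at hs2
  have hg : ∀ x : Fin d → ℝ, 1 + ∑ i, ((√c • B) *ᵥ x) i ^ 2 = 1 + c * ∑ i, (B *ᵥ x) i ^ 2 := by
    intro x
    rw [Finset.mul_sum]
    congr 1
    refine Finset.sum_congr rfl fun i _ => ?_
    rw [Matrix.smul_mulVec, Pi.smul_apply, smul_eq_mul, mul_pow, Real.sq_sqrt hc0.le]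
  have hgf : ∀ x : Fin d → ℝ, (1 + ∑ i, ((√c • B) *ᵥ x) i ^ 2) * f x
      = f x + c * ((∑ i, (B *ᵥ x) i ^ 2) * f x) := by
    intro x; rw [hg]; ring
  have hA0 : 0 < 2 * α / m := by positivity
  have hi1 : Integrable fun x : Fin d → ℝ => (1 + ∑ i, ((√c • B) *ᵥ x) i ^ 2) * f x := by
    simp_rw [hgf]; exact hfi.add (hq1.const_mul c)
  have hv1 : ∫ x : Fin d → ℝ, (1 + ∑ i, ((√c • B) *ᵥ x) i ^ 2) * f x = 2 * α / m := by
    simp_rw [hgf]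
    rw [integral_add hfi (hq1.const_mul c), integral_const_mul, hf1, hq2, hc]
    field_simp
    rw [hm]; ring
  have hdet : 0 < |(√c • B).det| := abs_pos.2 hMd0
  have hI0 : 0 < |(√c • B).det|⁻¹ *
      (π ^ ((d:ℝ)/2) * Gamma (m / (2 * (1 - α))) / Gamma (α / (1 - α))) := by
    have := pi_pos
    positivity
  have hfin := holder_aux d α h0 hαu f _ hf0 (fun x => by positivity) hfα _ _ hA0 hI0 hi1 hv1 hs1 hs2
  have hlog := Real.log_le_log hpos hfin
  have hlB : Real.log |B.det| = - (1/2) * Real.log S.det := by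
    have := congrArg Real.log hBd
    rw [Real.log_mul hBd0 hBd0, Real.log_inv] at this
    rw [Real.log_abs]; linarith
  have hldet : Real.log |(√c • B).det| = d / 2 * Real.log c - (1/2) * Real.log S.det := by
    rw [hMd, abs_mul, Real.log_mul (by positivity) (by positivity), hlB, abs_of_pos (by positivity),
      Real.log_pow, Real.log_sqrt hc0.le]
    ring
  have hpp := pi_pos
  rw [Real.log_mul (by positivity) (by positivity), Real.log_rpow hA0, Real.log_rpow hI0,
    Real.log_mul (by positivity) (by positivity), Real.log_inv, hldet,
    Real.log_div (by positivity) hG1.ne', Real.log_mul (by positivity) hG2.ne',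
    Real.log_rpow pi_pos] at hlog
  have e1 : Real.log (π * m / (1 - α)) = Real.log π - Real.log c := by
    rw [← Real.log_div pi_pos.ne' hc0.ne', hc]
    congr 1; field_simp
  have e2 : Real.log (m / (2 * α)) = - Real.log (2 * α / m) := by
    rw [← Real.log_inv, inv_div]
  rw [e1, e2, Real.log_div hG1.ne' hG2.ne', one_div, inv_mul_le_iff₀ h1]
  refine hlog.trans (le_of_eq ?_)
  field_simp
  ring
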